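/- Let n ≥ 1 and let p, q ≥ 1 satisfy n/p + 2/q > 1. Then there exist a bounded convex open set Ω ⊆ ℝⁿ with smooth boundary, a smooth transport term f⃗ : Ω×ℝ×[0,1) → ℝ^{n+1}, and a classical solution u of the graphical mean curvature flow with transport term f⃗ and Neumann boundary condition on Ω×(0,1), of the form u(x,t) = (1−t)^α φ(x/√(1−t)) with φ ∈ C_c^∞(Ω) and α < 1/2, such that ‖f⃗‖_{L^q_tL^p_x(0,1,Γ_t)} < ∞ while sup_{Ω×(0,1)} |du| = ∞. In particular, the hypothesis n/p + 2/q < 1 in the a priori gradient estimate cannot be relaxed to n/p + 2/q > 1. -/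

import Mathlib

open MeasureTheory Metric Set Real Filter
open scoped RealInnerProductSpace ENNReal NNReal Topology ContDiff

noncomputable section

abbrev Eucl (n : ℕ) := EuclideanSpace ℝ (Fin n)

variable {n : ℕ}

/-- spatial gradient of a time-dependent function -/
def sgrad (u : Eucl n → ℝ → ℝ) (x : Eucl n) (t : ℝ) : Eucl n :=
  gradient (fun y => u y t) x

/-- the area element `v = √(1+|du|²)` -/
def vel (u : Eucl n → ℝ → ℝ) (x : Eucl n) (t : ℝ) : ℝ :=
  Real.sqrt (1 + ‖sgrad u x t‖ ^ 2)

/-- divergence of a vector field on `ℝⁿ` -/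
def divg (F : Eucl n → Eucl n) (x : Eucl n) : ℝ :=
  ∑ i, fderiv ℝ (fun y => F y i) x (EuclideanSpace.single i 1)

/-- the upward unit normal `(−du,1)/v` of the graph, as a vector in `ℝ^{n+1}` -/
def unormal (u : Eucl n → ℝ → ℝ) (x : Eucl n) (t : ℝ) : Eucl (n + 1) :=
  (WithLp.equiv 2 (Fin (n + 1) → ℝ)).symm
    (Fin.snoc (fun i => -(sgrad u x t i) / vel u x t) (1 / vel u x t))

/-- the point `(x, u(x,t))` on the graph `Γ_t ⊆ ℝ^{n+1}` -/
def gpt (u : Eucl n → ℝ → ℝ) (x : Eucl n) (t : ℝ) : Eucl (n + 1) :=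
  (WithLp.equiv 2 (Fin (n + 1) → ℝ)).symm (Fin.snoc (fun i => x i) (u x t))

/-- `f⃗ · n⃗` evaluated at `(x, u(x,t), t)` -/
def fdotn (f : Eucl n → ℝ → ℝ → Eucl (n + 1)) (u : Eucl n → ℝ → ℝ)
    (x : Eucl n) (t : ℝ) : ℝ :=
  ⟪f x (u x t) t, unormal u x t⟫

/-- signed distance to `∂Ω` (negative inside `Ω`) -/
def sdist (Ω : Set (Eucl n)) (y : Eucl n) : ℝ := infDist y Ω - infDist y Ωᶜ

/-- the outward unit normal of `∂Ω`, as the gradient of the signed distance -/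
def outNormal (Ω : Set (Eucl n)) (x : Eucl n) : Eucl n := gradient (sdist Ω) x

/-- `∂Ω` is smooth: the signed distance is smooth near the boundary. -/
def SmoothBoundary (Ω : Set (Eucl n)) : Prop :=
  ∃ U : Set (Eucl n), IsOpen U ∧ frontier Ω ⊆ U ∧ ContDiffOn ℝ ∞ (sdist Ω) U

/-- classical solution of graphical MCF with transport term and Neumann condition -/
structure IsMCFSolution (Ω : Set (Eucl n)) (f : Eucl n → ℝ → ℝ → Eucl (n + 1))
    (u₀ : Eucl n → ℝ) (u : Eucl n → ℝ → ℝ) (T : ℝ) : Prop where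
  reg_x : ∀ t ∈ Ioo (0 : ℝ) T, ContDiffOn ℝ 2 (fun x => u x t) Ω
  reg_t : ∀ x ∈ Ω, ∀ t ∈ Ioo (0 : ℝ) T, DifferentiableAt ℝ (u x) t
  cont : ContinuousOn (fun p : Eucl n × ℝ => u p.1 p.2) (closure Ω ×ˢ Icc 0 T)
  grad_cont : ∀ t ∈ Ioo (0 : ℝ) T, ContinuousOn (fun x => sgrad u x t) (closure Ω)
  pde : ∀ x ∈ Ω, ∀ t ∈ Ioo (0 : ℝ) T,
    deriv (u x) t / vel u x t
      = divg (fun y => (vel u y t)⁻¹ • sgrad u y t) x + fdotn f u x t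
  neumann : ∀ t ∈ Ioo (0 : ℝ) T, ∀ x ∈ frontier Ω, ⟪sgrad u x t, outNormal Ω x⟫ = 0
  init : ∀ x ∈ closure Ω, u x 0 = u₀ x

/-- mixed norm `‖f⃗‖_{L^q_t L^p_x (a,b,Γ_t)}`, with the graph integral
`∫_{Γ_t} g dH^n = ∫_Ω g(x,u(x,t)) v dx`, as an extended real number -/
def mixedNormE (Ω : Set (Eucl n)) (f : Eucl n → ℝ → ℝ → Eucl (n + 1))
    (u : Eucl n → ℝ → ℝ) (p q a b : ℝ) : ℝ≥0∞ :=
  (∫⁻ t in Ioo a b,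
      (∫⁻ x in Ω, (‖f x (u x t) t‖₊ : ℝ≥0∞) ^ p * ENNReal.ofReal (vel u x t)) ^ (q / p))
    ^ (1 / q)

/-!
Under the parabolic rescaling `y = x / √(1 - t)` the ansatz has slope `(1 - t)^(α - 1/2) ∇φ(y)`,
which blows up as `t → 1` as soon as `α < 1/2`. Take the transport term to be vertical, of size
whatever the equation requires. Time derivative and curvature are both of order `(1 - t)^(α - 1)`:
for the curvature this holds however steep the graph gets, because
`μ² |⟨DG G, G⟩| / (1 + μ² |G|²) ≤ ‖DG‖` for every slope scale `μ`. The support has volume of order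
`(1 - t)^(n/2)` and the area element is at most of order `(1 - t)^(α - 1/2)`, so the
integral over `Γ_t` of the `p`-th power of the transport term is at most of order
`(1 - t)^((α - 1) p + (α - 1/2) + n/2)`. At `α = 1/2` the `q/p`-th power of this is integrable in
time exactly when `n/p + 2/q > 1`; integrability is an open condition on `α`, so it persists for
some `α < 1/2`.
-/

lemma fderiv_const_smul_comp_smul {E F : Type*} [NormedAddCommGroup E] [NormedSpace ℝ E]
    [NormedAddCommGroup F] [NormedSpace ℝ F] (g : E → F) (a c : ℝ) (x : E) :
    fderiv ℝ (fun y => a • g (c • y)) x = (a * c) • fderiv ℝ g (c • x) := by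
  rw [mul_smul, ← fderiv_comp_smul]
  exact congrFun (fderiv_const_smul_field a) x

section Gradient

variable {F : Type*} [NormedAddCommGroup F] [InnerProductSpace ℝ F] [CompleteSpace F]

lemma contDiff_gradient {g : F → ℝ} {m k : WithTop ℕ∞} (hg : ContDiff ℝ k g) (hmk : m + 1 ≤ k) :
    ContDiff ℝ m (gradient g) :=
  (InnerProductSpace.toDual ℝ F).symm.contDiff.comp (hg.fderiv_right hmk)

lemma gradient_const_mul_comp_smul (g : F → ℝ) (a c : ℝ) (x : F) :
    gradient (fun y => a * g (c • y)) x = (a * c) • gradient g (c • x) := by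
  have h : fderiv ℝ (fun y => a * g (c • y)) x = (a * c) • fderiv ℝ g (c • x) :=
    fderiv_const_smul_comp_smul g a c x
  simp only [gradient, h, map_smul]

lemma tsupport_gradient_subset (g : F → ℝ) : tsupport (gradient g) ⊆ tsupport g :=
  (tsupport_comp_subset (map_zero (InnerProductSpace.toDual ℝ F).symm) _).trans
    (tsupport_fderiv_subset ℝ)

lemma hasCompactSupport_gradient {g : F → ℝ} (hg : HasCompactSupport g) :
    HasCompactSupport (gradient g) :=
  hg.of_isClosed_subset (isClosed_tsupport _) (tsupport_gradient_subset g)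

lemma exists_gradient_ne_zero [Nontrivial F] {g : F → ℝ} (hg : Differentiable ℝ g)
    (hc : HasCompactSupport g) (h0 : g ≠ 0) : ∃ x, gradient g x ≠ 0 := by
  by_contra! h
  have hconst : ∀ x y, g x = g y := is_const_of_fderiv_eq_zero hg fun x => by
    rw [← toDual_gradient, h, map_zero]
  have : NoncompactSpace F := NormedSpace.noncompactSpace ℝ F
  obtain ⟨x, hx⟩ := (Set.ne_univ_iff_exists_notMem _).1 hc.isCompact.ne_univ
  exact h0 (funext fun y => (hconst y x).trans (image_eq_zero_of_notMem_tsupport hx))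

end Gradient

section Divergence

variable {G : Eucl n → Eucl n} {x : Eucl n}

lemma contDiff_divg {m k : WithTop ℕ∞} (hG : ContDiff ℝ k G) (hmk : m + 1 ≤ k) :
    ContDiff ℝ m (divg G) :=
  ContDiff.sum fun i _ => ((contDiff_euclidean.1 hG i).fderiv_right hmk).clm_apply contDiff_const

lemma divg_smul {a : Eucl n → ℝ} (ha : DifferentiableAt ℝ a x) (hG : DifferentiableAt ℝ G x) :
    divg (fun y => a y • G y) x = a x * divg G x + fderiv ℝ a x (G x) := by
  have hcoord (i : Fin n) : fderiv ℝ (fun y => (a y • G y) i) x =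
      a x • fderiv ℝ (fun y => G y i) x + G x i • fderiv ℝ a x :=
    fderiv_fun_mul ha (differentiableAt_euclidean.1 hG i)
  have hsum : fderiv ℝ a x (G x) = ∑ i, G x i * fderiv ℝ a x (EuclideanSpace.single i 1) := by
    conv_lhs => rw [← (EuclideanSpace.basisFun (Fin n) ℝ).sum_repr (G x)]
    simp
  simp only [divg, hcoord, hsum, Finset.mul_sum, ← Finset.sum_add_distrib]
  rfl

lemma divg_const_smul_comp_smul (G : Eucl n → Eucl n) (a c : ℝ) (x : Eucl n) :
    divg (fun y => a • G (c • y)) x = a * c * divg G (c • x) := by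
  have hcoord (i : Fin n) : fderiv ℝ (fun y => (a • G (c • y)) i) x =
      (a * c) • fderiv ℝ (fun y => G y i) (c • x) :=
    fderiv_const_smul_comp_smul (fun y => G y i) a c x
  simp only [divg, hcoord, Finset.mul_sum]
  rfl

lemma tsupport_divg_subset (G : Eucl n → Eucl n) : tsupport (divg G) ⊆ tsupport G := by
  refine closure_minimal (fun x hx => ?_) (isClosed_tsupport G)
  contrapose! hx
  have hcoord (i : Fin n) : fderiv ℝ (fun y => G y i) x = 0 := by
    refine image_eq_zero_of_notMem_tsupport fun h => hx ?_
    exact tsupport_comp_subset (g := fun v : Eucl n => v i) rfl G (tsupport_fderiv_subset ℝ h)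
  simp [divg, hcoord]

end Divergence

section MeanCurvatureOperator

/-- The graphical mean curvature flow operator on a field of slopes `μ G`, divided by `μ`. For
`μ = 1` and `G = du` it is `v div(du / v)`, `v = √(1 + |du|²)`. Keeping `μ` as a parameter makes
the operator smooth in `μ` and turns a rescaling of `G` into a change of `μ`. -/
def meanCurvatureOperator (μ : ℝ) (G : Eucl n → Eucl n) (x : Eucl n) : ℝ :=
  divg G x - μ ^ 2 * ⟪fderiv ℝ G x (G x), G x⟫ / (1 + μ ^ 2 * ‖G x‖ ^ 2)

variable {G : Eucl n → Eucl n} {x : Eucl n}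

lemma divg_inv_sqrt_smul (hG : DifferentiableAt ℝ G x) :
    divg (fun y => (√(1 + ‖G y‖ ^ 2))⁻¹ • G y) x =
      meanCurvatureOperator 1 G x / √(1 + ‖G x‖ ^ 2) := by
  have hpos : 0 < 1 + ‖G x‖ ^ 2 := by positivity
  have hsqrt : HasFDerivAt (fun y => √(1 + ‖G y‖ ^ 2)) _ x :=
    (hG.hasFDerivAt.norm_sq.const_add 1).sqrt hpos.ne'
  have hinv : HasFDerivAt (fun y => (√(1 + ‖G y‖ ^ 2))⁻¹) _ x :=
    (hasDerivAt_inv (sqrt_pos.2 hpos).ne').comp_hasFDerivAt x hsqrt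
  have hderiv : fderiv ℝ (fun y => (√(1 + ‖G y‖ ^ 2))⁻¹) x (G x) =
      -(⟪fderiv ℝ G x (G x), G x⟫ / (1 + ‖G x‖ ^ 2) / √(1 + ‖G x‖ ^ 2)) := by
    rw [hinv.fderiv, real_inner_comm, Real.sq_sqrt hpos.le]
    simp only [one_div, smul_apply, ContinuousLinearMap.comp_apply, innerSL_apply_apply,
      smul_eq_mul, nsmul_eq_mul]
    field_simp
    norm_num
  rw [divg_smul hinv.differentiableAt hG, hderiv, meanCurvatureOperator]
  ring

lemma meanCurvatureOperator_const_smul_comp_smul (G : Eucl n → Eucl n) (μ c : ℝ) (x : Eucl n) :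
    meanCurvatureOperator 1 (fun y => μ • G (c • y)) x =
      μ * c * meanCurvatureOperator μ G (c • x) := by
  simp only [meanCurvatureOperator, divg_const_smul_comp_smul, fderiv_const_smul_comp_smul,
    norm_smul, mul_pow, Real.norm_eq_abs, sq_abs, map_smul, smul_apply, real_inner_smul_left,
    real_inner_smul_right]
  ring

lemma abs_meanCurvatureOperator_le (μ : ℝ) (G : Eucl n → Eucl n) (x : Eucl n) :
    |meanCurvatureOperator μ G x| ≤ |divg G x| + ‖fderiv ℝ G x‖ := by
  have hinner : |⟪fderiv ℝ G x (G x), G x⟫| ≤ ‖fderiv ℝ G x‖ * ‖G x‖ ^ 2 := by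
    calc |⟪fderiv ℝ G x (G x), G x⟫| ≤ ‖fderiv ℝ G x (G x)‖ * ‖G x‖ := abs_real_inner_le_norm _ _
      _ ≤ ‖fderiv ℝ G x‖ * ‖G x‖ * ‖G x‖ := by gcongr; exact (fderiv ℝ G x).le_opNorm _
      _ = ‖fderiv ℝ G x‖ * ‖G x‖ ^ 2 := by ring
  refine (abs_sub _ _).trans ?_
  gcongr
  have hpos : 0 < 1 + μ ^ 2 * ‖G x‖ ^ 2 := by positivity
  rw [abs_div, abs_mul, abs_of_nonneg (sq_nonneg μ), abs_of_pos hpos, div_le_iff₀ hpos]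
  linarith [mul_le_mul_of_nonneg_left hinner (sq_nonneg μ), norm_nonneg (fderiv ℝ G x)]

lemma contDiff_meanCurvatureOperator {m k : WithTop ℕ∞} (hG : ContDiff ℝ k G) (hmk : m + 1 ≤ k) :
    ContDiff ℝ m fun P : ℝ × Eucl n => meanCurvatureOperator P.1 G P.2 := by
  have hG' : ContDiff ℝ m fun P : ℝ × Eucl n => G P.2 :=
    (hG.of_le (le_self_add.trans hmk)).comp contDiff_snd
  have hμ : ContDiff ℝ m fun P : ℝ × Eucl n => P.1 ^ 2 := contDiff_fst.pow 2
  have hfderiv : ContDiff ℝ m fun P : ℝ × Eucl n => fderiv ℝ G P.2 (G P.2) :=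
    ((hG.fderiv_right hmk).comp contDiff_snd).clm_apply hG'
  exact ((contDiff_divg hG hmk).comp contDiff_snd).sub
    ((hμ.mul (hfderiv.inner ℝ hG')).div (contDiff_const.add (hμ.mul (hG'.norm_sq ℝ)))
      fun P => by positivity)

lemma meanCurvatureOperator_eq_zero_of_notMem_tsupport (μ : ℝ) (hx : x ∉ tsupport G) :
    meanCurvatureOperator μ G x = 0 := by
  have hdivg : divg G x = 0 :=
    image_eq_zero_of_notMem_tsupport fun h => hx (tsupport_divg_subset G h)
  simp [meanCurvatureOperator, hdivg, image_eq_zero_of_notMem_tsupport hx]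

end MeanCurvatureOperator

section SelfSimilar

/-- The self-similar ansatz `u(x,t) = (1 - t)^α φ(x / √(1 - t))` with profile `φ`, which collapses
to the origin at time `t = 1`. -/
def selfSimilar (α : ℝ) (φ : Eucl n → ℝ) (x : Eucl n) (t : ℝ) : ℝ :=
  (1 - t) ^ α * φ ((√(1 - t))⁻¹ • x)

/-- The forcing `∂ₜu - v div(du / v)` of the self-similar ansatz in the rescaled variable
`y = x / √(1 - t)`, up to the factor `(1 - t)^(α - 1)`. The slope parameter `μ` stands for
`(1 - t)^(α - 1/2)`. -/
def profileForcing (α : ℝ) (φ : Eucl n → ℝ) (μ : ℝ) (y : Eucl n) : ℝ :=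
  -α * φ y + ⟪gradient φ y, y⟫ / 2 - meanCurvatureOperator μ (gradient φ) y

/-- The vertical transport term that makes the self-similar ansatz a solution; it does not depend
on the height `z`. -/
def selfSimilarTransport (α : ℝ) (φ : Eucl n → ℝ) (x : Eucl n) (_z t : ℝ) : Eucl (n + 1) :=
  ((1 - t) ^ (α - 1) * profileForcing α φ ((1 - t) ^ (α - 1 / 2)) ((√(1 - t))⁻¹ • x)) •
    EuclideanSpace.single (Fin.last n) 1

variable {α t : ℝ} {φ : Eucl n → ℝ} {x : Eucl n}

lemma rpow_mul_inv_sqrt {s : ℝ} (hs : 0 < s) (β : ℝ) : s ^ β * (√s)⁻¹ = s ^ (β - 1 / 2) := by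
  rw [rpow_sub hs, ← sqrt_eq_rpow, div_eq_mul_inv]

lemma sgrad_selfSimilar (α : ℝ) (φ : Eucl n → ℝ) (x : Eucl n) (ht : t < 1) :
    sgrad (selfSimilar α φ) x t = (1 - t) ^ (α - 1 / 2) • gradient φ ((√(1 - t))⁻¹ • x) := by
  rw [← rpow_mul_inv_sqrt (sub_pos.2 ht)]
  exact gradient_const_mul_comp_smul φ _ _ x

lemma contDiff_sgrad_selfSimilar (α : ℝ) (hφ : ContDiff ℝ 2 φ) (ht : t < 1) :
    ContDiff ℝ 1 fun x => sgrad (selfSimilar α φ) x t := by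
  simp only [sgrad_selfSimilar α φ _ ht]
  exact ((contDiff_gradient hφ one_add_one_eq_two.le).comp
    (contDiff_const_smul (√(1 - t))⁻¹)).const_smul _

lemma hasDerivAt_selfSimilar (α : ℝ) (ht : t < 1)
    (hφ : DifferentiableAt ℝ φ ((√(1 - t))⁻¹ • x)) :
    HasDerivAt (selfSimilar α φ x) ((1 - t) ^ (α - 1) *
      (-α * φ ((√(1 - t))⁻¹ • x) +
        ⟪gradient φ ((√(1 - t))⁻¹ • x), (√(1 - t))⁻¹ • x⟫ / 2)) t := by
  have hs : 0 < 1 - t := sub_pos.2 ht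
  have hsub : HasDerivAt (fun τ : ℝ => 1 - τ) (-1) t := (hasDerivAt_id t).const_sub 1
  have harg : HasDerivAt (fun τ : ℝ => (√(1 - τ))⁻¹ • x) _ t :=
    ((hsub.sqrt hs.ne').inv (sqrt_pos.2 hs).ne').smul_const x
  have hprofile : HasDerivAt (fun τ : ℝ => φ ((√(1 - τ))⁻¹ • x)) _ t :=
    hφ.hasFDerivAt.comp_hasDerivAt t harg
  refine ((hsub.rpow_const (p := α) (Or.inl hs.ne')).mul hprofile).congr_deriv ?_
  rw [← toDual_gradient, InnerProductSpace.toDual_apply_apply, real_inner_smul_right,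
    real_inner_smul_right, rpow_sub_one hs.ne', Real.sq_sqrt hs.le]
  field_simp

lemma vel_pos (u : Eucl n → ℝ → ℝ) (x : Eucl n) (t : ℝ) : 0 < vel u x t :=
  sqrt_pos.2 (by positivity)

lemma inner_single_last_unormal (u : Eucl n → ℝ → ℝ) (x : Eucl n) (t : ℝ) :
    ⟪EuclideanSpace.single (Fin.last n) (1 : ℝ), unormal u x t⟫ = (vel u x t)⁻¹ := by
  simp [EuclideanSpace.inner_single_left, unormal]

lemma meanCurvatureOperator_sgrad_selfSimilar (α : ℝ) (φ : Eucl n → ℝ) (x : Eucl n) (ht : t < 1) :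
    meanCurvatureOperator 1 (fun y => sgrad (selfSimilar α φ) y t) x =
      (1 - t) ^ (α - 1) *
        meanCurvatureOperator ((1 - t) ^ (α - 1 / 2)) (gradient φ) ((√(1 - t))⁻¹ • x) := by
  simp only [sgrad_selfSimilar α φ _ ht, meanCurvatureOperator_const_smul_comp_smul,
    rpow_mul_inv_sqrt (sub_pos.2 ht)]
  ring_nf

lemma selfSimilar_pde (hφ : ContDiff ℝ 2 φ) (α : ℝ) (x : Eucl n) (ht : t < 1) :
    deriv (selfSimilar α φ x) t / vel (selfSimilar α φ) x t =
      divg (fun y => (vel (selfSimilar α φ) y t)⁻¹ • sgrad (selfSimilar α φ) y t) x +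
        fdotn (selfSimilarTransport α φ) (selfSimilar α φ) x t := by
  have hcurv : divg (fun y => (vel (selfSimilar α φ) y t)⁻¹ • sgrad (selfSimilar α φ) y t) x =
      meanCurvatureOperator 1 (fun y => sgrad (selfSimilar α φ) y t) x /
        vel (selfSimilar α φ) x t :=
    divg_inv_sqrt_smul ((contDiff_sgrad_selfSimilar α hφ ht).differentiable one_ne_zero x)
  have htime := hasDerivAt_selfSimilar α ht (hφ.differentiable two_ne_zero ((√(1 - t))⁻¹ • x))
  rw [hcurv, meanCurvatureOperator_sgrad_selfSimilar α φ x ht, htime.deriv, fdotn,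
    selfSimilarTransport, real_inner_smul_left, inner_single_last_unormal, profileForcing]
  ring

lemma contDiffOn_selfSimilarTransport (hφ : ContDiff ℝ ∞ φ) (α : ℝ) :
    ContDiffOn ℝ ∞ (fun P : (Eucl n × ℝ) × ℝ => selfSimilarTransport α φ P.1.1 P.1.2 P.2)
      (univ ×ˢ Iio 1) := by
  have hgrad : ContDiff ℝ ∞ (gradient φ) := contDiff_gradient hφ (by simp)
  have hforce : ContDiff ℝ ∞ fun P : ℝ × Eucl n => profileForcing α φ P.1 P.2 :=
    ((contDiff_const.mul (hφ.comp contDiff_snd)).add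
      (((hgrad.comp contDiff_snd).inner ℝ contDiff_snd).div_const 2)).sub
      (contDiff_meanCurvatureOperator hgrad (by simp))
  have hne : ∀ P ∈ (univ ×ˢ Iio 1 : Set ((Eucl n × ℝ) × ℝ)), 1 - P.2 ≠ 0 :=
    fun P hP => (sub_pos.2 hP.2).ne'
  have hs : ContDiffOn ℝ ∞ (fun P : (Eucl n × ℝ) × ℝ => 1 - P.2) (univ ×ˢ Iio 1) :=
    (contDiff_const.sub contDiff_snd).contDiffOn
  have harg : ContDiffOn ℝ ∞ (fun P : (Eucl n × ℝ) × ℝ => (√(1 - P.2))⁻¹ • P.1.1)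
      (univ ×ˢ Iio 1) :=
    ((hs.sqrt hne).inv fun P hP => (sqrt_pos.2 (sub_pos.2 hP.2)).ne').smul
      contDiff_fst.fst.contDiffOn
  exact ((hs.rpow_const_of_ne hne).mul
    (hforce.comp_contDiffOn ((hs.rpow_const_of_ne hne).prodMk harg))).smul contDiffOn_const

lemma continuousOn_selfSimilar (hα : 0 < α) (hφ : Continuous φ) (hc : HasCompactSupport φ) :
    ContinuousOn (fun P : Eucl n × ℝ => selfSimilar α φ P.1 P.2) (univ ×ˢ Iic 1) := by
  rintro ⟨x, t⟩ ⟨-, ht : t ≤ 1⟩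
  have hpow : Continuous fun P : Eucl n × ℝ => (1 - P.2) ^ α :=
    (continuous_const.sub continuous_snd).rpow_const fun _ => Or.inr hα.le
  refine ContinuousAt.continuousWithinAt ?_
  rcases ht.eq_or_lt with rfl | ht
  · obtain ⟨C, hC⟩ := hc.exists_bound_of_continuous hφ
    have hzero : Tendsto (fun P : Eucl n × ℝ => (1 - P.2) ^ α) (𝓝 (x, 1)) (𝓝 0) := by
      simpa [zero_rpow hα.ne'] using hpow.tendsto (x, 1)
    have hbdd : IsBoundedUnder (· ≤ ·) (𝓝 (x, 1))
        (norm ∘ fun P : Eucl n × ℝ => φ ((√(1 - P.2))⁻¹ • P.1)) :=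
      isBoundedUnder_of ⟨C, fun P => hC _⟩
    simpa [ContinuousAt, selfSimilar, zero_rpow hα.ne'] using
      hzero.zero_mul_isBoundedUnder_le hbdd
  · have hsqrt : √(1 - t) ≠ 0 := (sqrt_pos.2 (sub_pos.2 ht)).ne'
    have harg : ContinuousAt (fun P : Eucl n × ℝ => (√(1 - P.2))⁻¹ • P.1) (x, t) := by
      fun_prop (disch := exact hsqrt)
    exact hpow.continuousAt.mul (hφ.continuousAt.comp harg)

lemma isMCFSolution_selfSimilar {Ω : Set (Eucl n)} (hΩ : IsOpen Ω) (hstar : StarConvex ℝ 0 Ω)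
    (hα : 0 < α) (hφ : ContDiff ℝ 2 φ) (hc : HasCompactSupport φ) (hsupp : tsupport φ ⊆ Ω) :
    IsMCFSolution Ω (selfSimilarTransport α φ) (fun x => selfSimilar α φ x 0)
      (selfSimilar α φ) 1 where
  reg_x _ _ := (contDiff_const.mul (hφ.comp (contDiff_const_smul _))).contDiffOn
  reg_t _ _ _ ht :=
    (hasDerivAt_selfSimilar α ht.2 (hφ.differentiable two_ne_zero _)).differentiableAt
  cont := (continuousOn_selfSimilar hα hφ.continuous hc).mono
    (prod_mono (subset_univ _) Icc_subset_Iic_self)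
  grad_cont _ ht := (contDiff_sgrad_selfSimilar α hφ ht.2).continuous.continuousOn
  pde x _ _ ht := selfSimilar_pde hφ α x ht.2
  neumann t ht x hx := by
    have hs : 0 < 1 - t := sub_pos.2 ht.2
    have hout : (√(1 - t))⁻¹ • x ∉ tsupport φ := fun hmem => by
      have hx' := hstar.smul_mem (hsupp hmem) (sqrt_nonneg (1 - t))
        (sqrt_le_one.2 (by linarith [ht.1]))
      rw [smul_inv_smul₀ (sqrt_pos.2 hs).ne'] at hx'
      exact (hΩ.frontier_eq ▸ hx).2 hx'
    have hzero : gradient φ ((√(1 - t))⁻¹ • x) = 0 :=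
      image_eq_zero_of_notMem_tsupport fun h => hout (tsupport_gradient_subset φ h)
    rw [sgrad_selfSimilar α φ x ht.2, hzero, smul_zero, inner_zero_left]
  init _ _ := rfl

lemma not_bounded_sgrad_selfSimilar {Ω : Set (Eucl n)} (hstar : StarConvex ℝ 0 Ω)
    (hα : α < 1 / 2) {y : Eucl n} (hy : y ∈ Ω) (hgrad : gradient φ y ≠ 0) :
    ¬∃ M : ℝ, ∀ x ∈ Ω, ∀ t ∈ Ioo (0 : ℝ) 1, ‖sgrad (selfSimilar α φ) x t‖ ≤ M := by
  rintro ⟨M, hM⟩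
  have hblowup : Tendsto (fun s : ℝ => s ^ (α - 1 / 2) * ‖gradient φ y‖) (𝓝[>] 0) atTop :=
    (tendsto_rpow_neg_nhdsGT_zero (by linarith)).atTop_mul_const (norm_pos_iff.2 hgrad)
  obtain ⟨s, hlarge, hs0, hs1⟩ :=
    ((hblowup.eventually_gt_atTop M).and (Ioo_mem_nhdsGT (zero_lt_one' ℝ))).exists
  have hmem : √s • y ∈ Ω := hstar.smul_mem hy (sqrt_nonneg s) (sqrt_le_one.2 hs1.le)
  have hbound := hM _ hmem (1 - s) ⟨by linarith, by linarith⟩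
  rw [sgrad_selfSimilar α φ _ (by linarith), sub_sub_cancel, inv_smul_smul₀ (sqrt_pos.2 hs0).ne',
    norm_smul, Real.norm_of_nonneg (rpow_nonneg hs0.le _)] at hbound
  exact hlarge.not_ge hbound

end SelfSimilar

section MixedNorm

lemma mixedNormE_ne_top_of_slice_le {Ω : Set (Eucl n)} {f : Eucl n → ℝ → ℝ → Eucl (n + 1)}
    {u : Eucl n → ℝ → ℝ} {p q a b γ : ℝ} (hp : 0 ≤ p) (hq : 0 ≤ q) (hγ : -1 < γ * (q / p))
    {C : ℝ≥0∞} (hC : C ≠ ⊤)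
    (hslice : ∀ t ∈ Ioo a b, ∫⁻ x in Ω, (‖f x (u x t) t‖₊ : ℝ≥0∞) ^ p *
      ENNReal.ofReal (vel u x t) ≤ C * ENNReal.ofReal ((b - t) ^ γ)) :
    mixedNormE Ω f u p q a b ≠ ⊤ := by
  have hqp : 0 ≤ q / p := div_nonneg hq hp
  have hint : IntegrableOn (fun t : ℝ => (b - t) ^ (γ * (q / p))) (Ioo a b) := by
    have h := (intervalIntegral.intervalIntegrable_rpow' (a := b - a) (b := b - b)
      hγ).comp_sub_left b
    simp only [sub_sub_cancel] at h
    exact h.1.mono_set Ioo_subset_Ioc_self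
  have hpow : ∀ t ∈ Ioo a b, (∫⁻ x in Ω, (‖f x (u x t) t‖₊ : ℝ≥0∞) ^ p *
      ENNReal.ofReal (vel u x t)) ^ (q / p) ≤
        C ^ (q / p) * ENNReal.ofReal ((b - t) ^ (γ * (q / p))) := fun t ht => by
    have hs : 0 ≤ b - t := sub_nonneg.2 ht.2.le
    rw [rpow_mul hs, ← ENNReal.ofReal_rpow_of_nonneg (rpow_nonneg hs γ) hqp,
      ← ENNReal.mul_rpow_of_nonneg _ _ hqp]
    exact ENNReal.rpow_le_rpow (hslice t ht) hqp
  refine ENNReal.rpow_ne_top_of_nonneg (one_div_nonneg.2 hq)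
    (ne_top_of_le_ne_top ?_ (setLIntegral_mono' measurableSet_Ioo hpow))
  have hCpow : C ^ (q / p) ≠ ⊤ := ENNReal.rpow_ne_top_of_nonneg hqp hC
  rw [lintegral_const_mul' _ _ hCpow]
  exact ENNReal.mul_ne_top hCpow hint.lintegral_lt_top.ne

lemma volume_preimage_inv_sqrt_smul {s : ℝ} (hs : 0 < s) (K : Set (Eucl n)) :
    volume ((fun x => (√s)⁻¹ • x) ⁻¹' K) = ENNReal.ofReal (s ^ (n / 2 : ℝ)) * volume K := by
  rw [Measure.addHaar_preimage_smul _ (inv_ne_zero (sqrt_pos.2 hs).ne'), finrank_euclideanSpace_fin,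
    inv_pow, inv_inv, abs_of_nonneg (by positivity), sqrt_eq_rpow, ← rpow_mul_natCast hs.le,
    one_div_mul_eq_div]

variable {α p t : ℝ} {φ : Eucl n → ℝ}

lemma exists_abs_profileForcing_le (α : ℝ) (hφ : ContDiff ℝ 2 φ) (hc : HasCompactSupport φ) :
    ∃ C, ∀ μ y, |profileForcing α φ μ y| ≤ C := by
  have hgrad : ContDiff ℝ 1 (gradient φ) := contDiff_gradient hφ one_add_one_eq_two.le
  have hgradc : HasCompactSupport (gradient φ) := hasCompactSupport_gradient hc
  have hdivgc : HasCompactSupport (divg (gradient φ)) :=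
    hgradc.of_isClosed_subset (isClosed_tsupport _) (tsupport_divg_subset _)
  have hlinc : HasCompactSupport fun y => -α * φ y + ⟪gradient φ y, y⟫ / 2 :=
    hc.mono' fun y hy => by_contra fun hmem => hy (by
      simp [image_eq_zero_of_notMem_tsupport hmem,
        image_eq_zero_of_notMem_tsupport fun h => hmem (tsupport_gradient_subset φ h)])
  obtain ⟨A, hA⟩ := hlinc.exists_bound_of_continuous ((continuous_const.mul hφ.continuous).add
    ((hgrad.continuous.inner continuous_id).div_const 2))
  obtain ⟨B, hB⟩ := hdivgc.exists_bound_of_continuous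
    (contDiff_divg hgrad (zero_add 1).le).continuous
  obtain ⟨D, hD⟩ := (hgradc.fderiv ℝ).exists_bound_of_continuous
    (hgrad.continuous_fderiv one_ne_zero)
  exact ⟨A + (B + D), fun μ y => (abs_sub _ _).trans <| add_le_add (hA y) <|
    (abs_meanCurvatureOperator_le μ _ y).trans (add_le_add (hB y) (hD y))⟩

lemma profileForcing_eq_zero_of_notMem_tsupport (α μ : ℝ) {y : Eucl n} (hy : y ∉ tsupport φ) :
    profileForcing α φ μ y = 0 := by
  have hgrad : y ∉ tsupport (gradient φ) := fun h => hy (tsupport_gradient_subset φ h)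
  simp [profileForcing, meanCurvatureOperator_eq_zero_of_notMem_tsupport μ hgrad,
    image_eq_zero_of_notMem_tsupport hgrad, image_eq_zero_of_notMem_tsupport hy]

lemma norm_selfSimilarTransport (α : ℝ) (φ : Eucl n → ℝ) (x : Eucl n) (z : ℝ) (ht : t < 1) :
    ‖selfSimilarTransport α φ x z t‖ = (1 - t) ^ (α - 1) *
      |profileForcing α φ ((1 - t) ^ (α - 1 / 2)) ((√(1 - t))⁻¹ • x)| := by
  simp [selfSimilarTransport, norm_smul, abs_of_pos (rpow_pos_of_pos (sub_pos.2 ht) _)]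

lemma exists_vel_selfSimilar_le (hα : α ≤ 1 / 2) (hφ : ContDiff ℝ 1 φ)
    (hc : HasCompactSupport φ) :
    ∃ V, ∀ x, ∀ t ∈ Ico (0 : ℝ) 1, vel (selfSimilar α φ) x t ≤ V * (1 - t) ^ (α - 1 / 2) := by
  obtain ⟨M, hM⟩ := (hasCompactSupport_gradient hc).exists_bound_of_continuous
    (contDiff_gradient hφ (zero_add 1).le).continuous
  refine ⟨√(1 + M ^ 2), fun x t ht => ?_⟩
  have hμ : 1 ≤ (1 - t) ^ (α - 1 / 2) := one_le_rpow_of_pos_of_le_one_of_nonpos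
    (sub_pos.2 ht.2) (by linarith [ht.1]) (by linarith)
  have hμ0 : 0 ≤ (1 - t) ^ (α - 1 / 2) := zero_le_one.trans hμ
  rw [vel, sgrad_selfSimilar α φ x ht.2, norm_smul, Real.norm_of_nonneg hμ0,
    sqrt_le_left (by positivity), mul_pow, mul_pow, Real.sq_sqrt (by positivity), add_mul, one_mul,
    mul_comm (M ^ 2)]
  gcongr
  · exact one_le_pow₀ hμ
  · exact hM _

lemma exists_norm_selfSimilarTransport_rpow_mul_vel_le (hp : 0 ≤ p) (hα : α ≤ 1 / 2)
    (hφ : ContDiff ℝ 2 φ) (hc : HasCompactSupport φ) :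
    ∃ C, ∀ x z, ∀ t ∈ Ico (0 : ℝ) 1,
      ‖selfSimilarTransport α φ x z t‖ ^ p * vel (selfSimilar α φ) x t ≤
        C * (1 - t) ^ ((α - 1) * p + (α - 1 / 2)) := by
  obtain ⟨F, hF⟩ := exists_abs_profileForcing_le α hφ hc
  obtain ⟨V, hV⟩ := exists_vel_selfSimilar_le hα (hφ.of_le one_le_two) hc
  have hF0 : 0 ≤ F := (abs_nonneg _).trans (hF 0 0)
  refine ⟨F ^ p * V, fun x z t ht => ?_⟩
  have hs : 0 < 1 - t := sub_pos.2 ht.2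
  have hnorm : ‖selfSimilarTransport α φ x z t‖ ≤ (1 - t) ^ (α - 1) * F := by
    rw [norm_selfSimilarTransport α φ x z ht.2]
    gcongr
    exact hF _ _
  calc ‖selfSimilarTransport α φ x z t‖ ^ p * vel (selfSimilar α φ) x t
      ≤ ((1 - t) ^ (α - 1) * F) ^ p * (V * (1 - t) ^ (α - 1 / 2)) := by
        gcongr
        · exact (vel_pos _ _ _).le
        · exact hV x t ht
    _ = F ^ p * V * (1 - t) ^ ((α - 1) * p + (α - 1 / 2)) := by
        rw [mul_rpow (by positivity) hF0, ← rpow_mul hs.le, rpow_add hs]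
        ring

lemma exists_lintegral_selfSimilarTransport_le (Ω : Set (Eucl n)) (hp : 0 < p) (hα : α ≤ 1 / 2)
    (hφ : ContDiff ℝ 2 φ) (hc : HasCompactSupport φ) :
    ∃ C : ℝ≥0∞, C ≠ ⊤ ∧ ∀ t ∈ Ioo (0 : ℝ) 1,
      ∫⁻ x in Ω, (‖selfSimilarTransport α φ x (selfSimilar α φ x t) t‖₊ : ℝ≥0∞) ^ p *
        ENNReal.ofReal (vel (selfSimilar α φ) x t) ≤
          C * ENNReal.ofReal ((1 - t) ^ ((α - 1) * p + (α - 1 / 2) + n / 2)) := by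
  obtain ⟨C, hC⟩ := exists_norm_selfSimilarTransport_rpow_mul_vel_le hp.le hα hφ hc
  refine ⟨ENNReal.ofReal C * volume (tsupport φ),
    ENNReal.mul_ne_top ENNReal.ofReal_ne_top hc.isCompact.measure_lt_top.ne, fun t ht => ?_⟩
  have hs : 0 < 1 - t := sub_pos.2 ht.2
  set γ : ℝ := (α - 1) * p + (α - 1 / 2)
  set K : Set (Eucl n) := (fun x => (√(1 - t))⁻¹ • x) ⁻¹' tsupport φ
  have hbound (x : Eucl n) :
      (‖selfSimilarTransport α φ x (selfSimilar α φ x t) t‖₊ : ℝ≥0∞) ^ p *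
        ENNReal.ofReal (vel (selfSimilar α φ) x t) ≤
      K.indicator (fun _ => ENNReal.ofReal (C * (1 - t) ^ γ)) x := by
    rw [← enorm_eq_nnnorm, ← ofReal_norm]
    by_cases hx : x ∈ K
    · rw [indicator_of_mem hx, ENNReal.ofReal_rpow_of_nonneg (norm_nonneg _) hp.le,
        ← ENNReal.ofReal_mul (by positivity)]
      exact ENNReal.ofReal_le_ofReal (hC x _ t ⟨ht.1.le, ht.2⟩)
    · simp [norm_selfSimilarTransport α φ x _ ht.2,
        profileForcing_eq_zero_of_notMem_tsupport _ _ hx, hp]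
  calc ∫⁻ x in Ω, (‖selfSimilarTransport α φ x (selfSimilar α φ x t) t‖₊ : ℝ≥0∞) ^ p *
        ENNReal.ofReal (vel (selfSimilar α φ) x t)
      ≤ ∫⁻ x, K.indicator (fun _ => ENNReal.ofReal (C * (1 - t) ^ γ)) x :=
        (setLIntegral_le_lintegral _ _).trans (lintegral_mono hbound)
    _ ≤ ENNReal.ofReal (C * (1 - t) ^ γ) *
        (ENNReal.ofReal ((1 - t) ^ (n / 2 : ℝ)) * volume (tsupport φ)) :=
        (lintegral_indicator_const_le _ _).trans_eq
          (by rw [volume_preimage_inv_sqrt_smul hs])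
    _ = ENNReal.ofReal C * volume (tsupport φ) * ENNReal.ofReal ((1 - t) ^ (γ + n / 2)) := by
        rw [rpow_add hs γ, ENNReal.ofReal_mul' (by positivity), ENNReal.ofReal_mul (by positivity)]
        ring

lemma exists_mem_Ioo_neg_one_lt_exponent {m p q : ℝ} (hp : 0 < p) (hq : 0 < q)
    (hpq : 1 < m / p + 2 / q) :
    ∃ α ∈ Ioo (0 : ℝ) (1 / 2), -1 < ((α - 1) * p + (α - 1 / 2) + m / 2) * (q / p) := by
  have hcont : Continuous fun α : ℝ => ((α - 1) * p + (α - 1 / 2) + m / 2) * (q / p) := by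
    fun_prop
  have hhalf : -1 < ((1 / 2 - 1) * p + (1 / 2 - 1 / 2) + m / 2) * (q / p) := by
    have h : ((1 / 2 - 1) * p + (1 / 2 - 1 / 2) + m / 2) * (q / p) + 1 =
        q / 2 * (m / p + 2 / q - 1) := by field_simp; ring
    linarith [mul_pos (half_pos hq) (sub_pos.2 hpq)]
  have hlt : ∀ᶠ α in 𝓝[<] (1 / 2 : ℝ), -1 < ((α - 1) * p + (α - 1 / 2) + m / 2) * (q / p) :=
    (hcont.continuousAt.eventually_const_lt hhalf).filter_mono nhdsWithin_le_nhds
  exact (Filter.Eventually.and (Ioo_mem_nhdsLT one_half_pos) hlt).exists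

end MixedNorm

section SmoothBoundary

variable {E : Type*} [NormedAddCommGroup E] [NormedSpace ℝ E] {c y : E} {r : ℝ}

lemma infDist_ball (hr : 0 < r) (h : r ≤ dist y c) : infDist y (ball c r) = dist y c - r := by
  rw [← thickening_singleton, infDist, infEDist_thickening hr, infEDist_singleton, edist_dist,
    ← ENNReal.ofReal_sub _ hr.le, ENNReal.toReal_ofReal (sub_nonneg.2 h)]

lemma infDist_compl_ball (hr : 0 ≤ r) (hy : y ≠ c) (h : dist y c ≤ r) :
    infDist y (ball c r)ᶜ = r - dist y c := by
  have hd : 0 < dist c y := dist_pos.2 hy.symm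
  have hmem : AffineMap.lineMap c y (r / dist c y) ∈ (ball c r)ᶜ := by
    simp [dist_lineMap_left, abs_of_nonneg hr, hd.ne']
  refine le_antisymm ?_ ((le_infDist ⟨_, hmem⟩).2 fun z hz => ?_)
  · refine (infDist_le_dist_of_mem hmem).trans_eq ?_
    rw [dist_right_lineMap, Real.norm_of_nonpos, neg_sub, sub_mul, div_mul_cancel₀ _ hd.ne',
      one_mul, dist_comm]
    rwa [sub_nonpos, one_le_div hd, dist_comm]
  · rw [mem_compl_iff, mem_ball, not_lt] at hz
    linarith [dist_triangle_left z c y]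

lemma sdist_ball {c y : Eucl n} (hr : 0 < r) (hy : y ≠ c) : sdist (ball c r) y = dist y c - r := by
  rcases lt_or_ge (dist y c) r with h | h
  · rw [sdist, infDist_zero_of_mem (mem_ball.2 h), infDist_compl_ball hr.le hy h.le]
    ring
  · rw [sdist, infDist_ball hr h, infDist_zero_of_mem (by simpa using h), sub_zero]

lemma smoothBoundary_ball (c : Eucl n) (hr : 0 < r) : SmoothBoundary (ball c r) := by
  refine ⟨{c}ᶜ, isOpen_compl_singleton, ?_, ?_⟩
  · rw [frontier_ball c hr.ne']
    exact fun x hx => ne_of_mem_sphere hx hr.ne'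
  · have hdist : ContDiffOn ℝ ∞ (fun y => dist y c - r) {c}ᶜ := fun y hy =>
      ((contDiffAt_id.dist ℝ contDiffAt_const hy).sub contDiffAt_const).contDiffWithinAt
    exact hdist.congr fun y hy => sdist_ball hr hy

end SmoothBoundary

theorem optimality_of_transport_condition_general [NeZero n] {p q : ℝ} (hp : 0 < p) (hq : 0 < q)
    (hpq : (n : ℝ) / p + 2 / q > 1) {Ω : Set (Eucl n)} (hΩ : IsOpen Ω) (hstar : StarConvex ℝ 0 Ω)
    {φ : Eucl n → ℝ} (hφ : ContDiff ℝ ∞ φ) (hc : HasCompactSupport φ) (hsupp : tsupport φ ⊆ Ω)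
    (hφ0 : φ ≠ 0) :
    ∃ (f : Eucl n → ℝ → ℝ → Eucl (n + 1)) (u : Eucl n → ℝ → ℝ) (α : ℝ),
      ContDiffOn ℝ ∞ (fun P : (Eucl n × ℝ) × ℝ => f P.1.1 P.1.2 P.2) (univ ×ˢ Iio 1) ∧
      α < 1 / 2 ∧ u = (fun x t => (1 - t) ^ α * φ ((√(1 - t))⁻¹ • x)) ∧
      IsMCFSolution Ω f (fun x => u x 0) u 1 ∧ mixedNormE Ω f u p q 0 1 ≠ ⊤ ∧
      ¬∃ M : ℝ, ∀ x ∈ Ω, ∀ t ∈ Ioo (0 : ℝ) 1, ‖sgrad u x t‖ ≤ M := by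
  have hφ2 : ContDiff ℝ 2 φ := hφ.of_le (by norm_cast)
  obtain ⟨α, ⟨hα0, hα⟩, hγ⟩ := exists_mem_Ioo_neg_one_lt_exponent hp hq hpq
  obtain ⟨C, hC, hslice⟩ := exists_lintegral_selfSimilarTransport_le Ω hp hα.le hφ2 hc
  obtain ⟨y, hy⟩ := exists_gradient_ne_zero (hφ2.differentiable two_ne_zero) hc hφ0
  have hyΩ : y ∈ Ω := hsupp (tsupport_gradient_subset φ (subset_tsupport _ hy))
  exact ⟨selfSimilarTransport α φ, selfSimilar α φ, α, contDiffOn_selfSimilarTransport hφ α, hα,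
    rfl, isMCFSolution_selfSimilar hΩ hstar hα0 hφ2 hc hsupp,
    mixedNormE_ne_top_of_slice_le hp.le hq.le hγ hC hslice,
    not_bounded_sgrad_selfSimilar hstar hα hyΩ hy⟩

/-- optimality of the integrability condition on the transport
term: if `n/p + 2/q > 1` there is a solution with finite mixed norm of the
transport term whose gradient blows up. -/
theorem optimality_of_transport_condition
    (n : ℕ) (hn : 1 ≤ n) (p q : ℝ) (hp : 1 ≤ p) (hq : 1 ≤ q)
    (hpq : (n : ℝ) / p + 2 / q > 1) :
    ∃ (Ω : Set (Eucl n)) (f : Eucl n → ℝ → ℝ → Eucl (n + 1))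
      (u : Eucl n → ℝ → ℝ) (φ : Eucl n → ℝ) (α : ℝ),
      IsOpen Ω ∧ Bornology.IsBounded Ω ∧ Convex ℝ Ω ∧ SmoothBoundary Ω ∧
      -- `f⃗` is a smooth transport term on `Ω × ℝ × [0,1)`
      ContDiffOn ℝ ∞ (fun P : (Eucl n × ℝ) × ℝ => f P.1.1 P.1.2 P.2)
        (univ ×ˢ Ico (0 : ℝ) 1) ∧
      -- `u` is the self-similar ansatz `(1−t)^α φ(x/√(1−t))` with `φ ∈ C_c^∞(Ω)`
      ContDiff ℝ ∞ φ ∧ HasCompactSupport φ ∧ tsupport φ ⊆ Ω ∧ α < 1 / 2 ∧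
      u = (fun x t => (1 - t) ^ α * φ ((Real.sqrt (1 - t))⁻¹ • x)) ∧
      -- `u` is a classical solution on `Ω × (0,1)` with Neumann boundary condition
      IsMCFSolution Ω f (fun x => u x 0) u 1 ∧
      -- `‖f⃗‖_{L^q_t L^p_x(0,1,Γ_t)} < ∞`
      mixedNormE Ω f u p q 0 1 ≠ ⊤ ∧
      -- but the gradient of the solution is unbounded
      ¬∃ M : ℝ, ∀ x ∈ Ω, ∀ t ∈ Ioo (0 : ℝ) 1, ‖sgrad u x t‖ ≤ M := by
  have : NeZero n := ⟨by lia⟩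
  let φ : ContDiffBump (0 : Eucl n) := ⟨1, 2, one_pos, one_lt_two⟩
  have hsupp : tsupport φ ⊆ ball 0 3 :=
    φ.tsupport_eq.trans_subset (closedBall_subset_ball (by norm_num))
  obtain ⟨f, u, α, hf, hα, hu, hsol, hnorm, hgrad⟩ := optimality_of_transport_condition_general
    (by linarith) (by linarith) hpq isOpen_ball ((convex_ball 0 3).starConvex (by simp))
    φ.contDiff φ.hasCompactSupport hsupp fun h => by simpa [h] using φ.eventuallyEq_one.self_of_nhds
  exact ⟨ball 0 3, f, u, φ, α, isOpen_ball, isBounded_ball, convex_ball 0 3,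
    smoothBoundary_ball 0 (by norm_num), hf.mono (prod_mono_right Ico_subset_Iio_self),
    φ.contDiff, φ.hasCompactSupport, hsupp, hα, hu, hsol, hnorm, hgrad⟩

end
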